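/- There exists a constant C > 0, depending only on d and α, such that for every 0 < r ≤ 1/4, with z_r := (0, …, 0, 1 + r/2) ∈ ℝ^d, one has ∫_{{y : |y − z_r| < 1 and |y| < 7r/8}} |y|^{α−d} dy ≥ C r^α. -/

import Mathlib

open MeasureTheory

/-!
The lens `{|y - z_r| < 1, |y| < 7r/8}` contains the ball of radius `κ r` that touches the unit
ball around `z_r = (1 + r/2) e` internally at its point `(r/2) e` nearest the origin, as soon as
`κ r ≤ 1` and `κ ≤ 3/16`. On that small ball `r/2 < |y| < 7r/8`, so the integrand is at least a
constant times `r^(α - d)`, while the volume of the ball is proportional to `r^d`.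
-/

theorem min_rpow_le_rpow {a b x : ℝ} (s : ℝ) (ha : 0 < a) (hax : a ≤ x) (hxb : x ≤ b) :
    min (a ^ s) (b ^ s) ≤ x ^ s := by
  rcases le_total 0 s with hs | hs
  · exact (min_le_left _ _).trans (Real.rpow_le_rpow ha.le hax hs)
  · exact (min_le_right _ _).trans (Real.rpow_le_rpow_of_nonpos (ha.trans_le hax) hxb hs)

theorem min_rpow_mul_rpow_le_rpow {a b r x : ℝ} (s : ℝ) (ha : 0 < a) (hr : 0 < r)
    (hax : a * r ≤ x) (hxb : x ≤ b * r) : min (a ^ s) (b ^ s) * r ^ s ≤ x ^ s := by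
  have hx : 0 ≤ x := (mul_pos ha hr).le.trans hax
  calc min (a ^ s) (b ^ s) * r ^ s
      ≤ (x / r) ^ s * r ^ s := by
        gcongr
        exact min_rpow_le_rpow s ha ((le_div_iff₀ hr).2 hax) ((div_le_iff₀ hr).2 hxb)
    _ = x ^ s := by
        rw [← Real.mul_rpow (div_nonneg hx hr.le) hr.le, div_mul_cancel₀ _ hr.ne']

theorem ofReal_mul_measureReal_le_setLIntegral {X : Type*} [MeasurableSpace X] {μ : Measure X}
    {A S : Set X} {f : X → ℝ} {m : ℝ} (hA : MeasurableSet A) (hμA : μ A ≠ ⊤) (hAS : A ⊆ S)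
    (hf : ∀ y ∈ A, m ≤ f y) :
    ENNReal.ofReal (m * μ.real A) ≤ ∫⁻ y in S, ENNReal.ofReal (f y) ∂μ :=
  calc ENNReal.ofReal (m * μ.real A)
      = ∫⁻ _ in A, ENNReal.ofReal m ∂μ := by
        rw [ENNReal.ofReal_mul' measureReal_nonneg, ofReal_measureReal hμA, setLIntegral_const]
    _ ≤ ∫⁻ y in A, ENNReal.ofReal (f y) ∂μ :=
        setLIntegral_mono' hA fun y hy ↦ ENNReal.ofReal_le_ofReal (hf y hy)
    _ ≤ ∫⁻ y in S, ENNReal.ofReal (f y) ∂μ := lintegral_mono_set hAS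

section NormedSpace

variable {E : Type*} [NormedAddCommGroup E] [NormedSpace ℝ E] {e : E}

theorem ball_add_smul_subset_ball_add_smul (he : ‖e‖ = 1) (t : ℝ) {a b : ℝ} (hab : a ≤ b) :
    Metric.ball ((t + a) • e) a ⊆ Metric.ball ((t + b) • e) b := by
  refine Metric.ball_subset_ball' (le_of_eq ?_)
  rw [dist_eq_norm, ← sub_smul, norm_smul, he, Real.norm_of_nonpos (by linarith)]
  ring

theorem norm_mem_Ioo_of_mem_ball_add_smul (he : ‖e‖ = 1) {t ρ : ℝ} (ht : 0 ≤ t) {y : E}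
    (hy : y ∈ Metric.ball ((t + ρ) • e) ρ) : ‖y‖ ∈ Set.Ioo t (t + 2 * ρ) := by
  have hρ : 0 < ρ := Metric.pos_of_mem_ball hy
  have hcenter : ‖(t + ρ) • e‖ = t + ρ := by
    rw [norm_smul, he, mul_one, Real.norm_of_nonneg (by positivity)]
  have hdist : |‖y‖ - (t + ρ)| < ρ :=
    hcenter ▸ (abs_norm_sub_norm_le y _).trans_lt (mem_ball_iff_norm.1 hy)
  rw [abs_lt] at hdist
  constructor <;> linarith

theorem ball_half_add_smul_subset_lens (he : ‖e‖ = 1) {r ρ : ℝ} (hρ : ρ ≤ 1)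
    (hρr : ρ ≤ 3 / 16 * r) :
    Metric.ball ((r / 2 + ρ) • e) ρ ⊆ {y | ‖y - (1 + r / 2) • e‖ < 1 ∧ ‖y‖ < 7 * r / 8} := by
  intro y hy
  have hr : 0 ≤ r := by linarith [Metric.pos_of_mem_ball hy]
  have hunit : ‖y - (1 + r / 2) • e‖ < 1 := by
    rw [← mem_ball_iff_norm, add_comm]
    exact ball_add_smul_subset_ball_add_smul he (r / 2) hρ hy
  have hnorm : ‖y‖ < r / 2 + 2 * ρ :=
    (norm_mem_Ioo_of_mem_ball_add_smul he (by positivity) hy).2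
  exact ⟨hunit, by linarith⟩

variable [FiniteDimensional ℝ E] [MeasurableSpace E] [BorelSpace E]

theorem measureReal_ball_of_pos (μ : Measure E) [μ.IsAddHaarMeasure] (c : E) {ρ : ℝ}
    (hρ : 0 < ρ) :
    μ.real (Metric.ball c ρ) = ρ ^ Module.finrank ℝ E * μ.real (Metric.ball 0 1) := by
  simp only [Measure.real, Measure.addHaar_ball_of_pos μ c hρ, ENNReal.toReal_mul,
    ENNReal.toReal_ofReal (pow_nonneg hρ.le _)]

theorem statement14_general (μ : Measure E) [μ.IsAddHaarMeasure] (α : ℝ) {R : ℝ} (hR : 0 < R) :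
    ∃ C : ℝ, 0 < C ∧
      ∀ e : E, ‖e‖ = 1 → ∀ r : ℝ, 0 < r → r ≤ R →
        ENNReal.ofReal (C * r ^ α) ≤
          ∫⁻ y in {y : E | ‖y - (1 + r / 2) • e‖ < 1 ∧ ‖y‖ < 7 * r / 8},
            ENNReal.ofReal (‖y‖ ^ (α - Module.finrank ℝ E)) ∂μ := by
  set n := Module.finrank ℝ E
  set s : ℝ := α - n
  set κ : ℝ := min (3 / 16) R⁻¹
  set m : ℝ := min ((1 / 2) ^ s) ((7 / 8) ^ s)
  have hκ : 0 < κ := by positivity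
  have hunit : 0 < μ.real (Metric.ball 0 1) :=
    ENNReal.toReal_pos (Metric.measure_ball_pos μ 0 one_pos).ne' measure_ball_lt_top.ne
  refine ⟨m * (κ ^ n * μ.real (Metric.ball 0 1)), by positivity, fun e he r hr hrR ↦ ?_⟩
  set A := Metric.ball ((r / 2 + κ * r) • e) (κ * r)
  have hκr : κ * r ≤ 1 := calc
    κ * r ≤ R⁻¹ * R := by gcongr; exact min_le_right _ _
    _ = 1 := inv_mul_cancel₀ hR.ne'
  have hκ_le : κ * r ≤ 3 / 16 * r := by gcongr; exact min_le_left _ _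
  have hA_subset : A ⊆ {y | ‖y - (1 + r / 2) • e‖ < 1 ∧ ‖y‖ < 7 * r / 8} :=
    ball_half_add_smul_subset_lens he hκr hκ_le
  have hA_norm : ∀ y ∈ A, m * r ^ s ≤ ‖y‖ ^ s := fun y hy ↦ by
    have hlower : r / 2 < ‖y‖ := (norm_mem_Ioo_of_mem_ball_add_smul he (half_pos hr).le hy).1
    have hupper : ‖y‖ < 7 * r / 8 := (hA_subset hy).2
    exact min_rpow_mul_rpow_le_rpow s (by norm_num) hr (by linarith) (by linarith)
  have hscale : m * (κ ^ n * μ.real (Metric.ball 0 1)) * r ^ α = m * r ^ s * μ.real A := by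
    rw [measureReal_ball_of_pos μ _ (mul_pos hκ hr), mul_pow, ← sub_add_cancel α n,
      Real.rpow_add_natCast hr.ne']
    ring
  rw [hscale]
  exact ofReal_mul_measureReal_le_setLIntegral measurableSet_ball measure_ball_lt_top.ne
    hA_subset hA_norm

end NormedSpace

theorem smul_euclideanSpace_single {𝕜 ι : Type*} [RCLike 𝕜] [DecidableEq ι] (i : ι) (a b : 𝕜) :
    a • EuclideanSpace.single i b = EuclideanSpace.single i (a * b) := by
  ext j
  simp

/-- there is `C = C(d,α) > 0` such that for every `0 < r ≤ 1/4`,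
with `z_r = (0,…,0,1+r/2)`,
`∫_{ {|y - z_r| < 1} ∩ {|y| < 7r/8} } |y|^{α-d} dy ≥ C r^α`. -/
theorem statement14 (d : ℕ) (hd : 2 ≤ d) (α : ℝ) (hα : 0 < α) (hα2 : α < 2) :
    ∃ C : ℝ, 0 < C ∧
      ∀ r : ℝ, 0 < r → r ≤ 1 / 4 →
        ENNReal.ofReal (C * r ^ α) ≤
          ∫⁻ y in {y : EuclideanSpace ℝ (Fin d) |
              ‖y - EuclideanSpace.single (⟨d - 1, by omega⟩ : Fin d) (1 + r / 2)‖ < 1 ∧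
              ‖y‖ < 7 * r / 8},
            ENNReal.ofReal (‖y‖ ^ (α - (d : ℝ))) := by
  obtain ⟨C, hC, hbound⟩ := statement14_general (E := EuclideanSpace ℝ (Fin d)) volume α one_pos
  refine ⟨C, hC, fun r hr hr4 ↦ ?_⟩
  simpa only [smul_euclideanSpace_single, mul_one, finrank_euclideanSpace_fin] using
    hbound (EuclideanSpace.single ⟨d - 1, by omega⟩ 1) (by simp) r hr (by linarith)
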